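/- If a probability distribution p on Ω = Ω₁ × ⋯ × Ω_N satisfies I(p) = ∑_{i=1}^{N−1} ln n_i, then H(p_i) = ln n_i for every i = 1,…,N−1 (equivalently, the marginal p_i is the uniform distribution on Ω_i for i = 1,…,N−1), and moreover H(p) = H(p_N). -/

import Mathlib

/-!
Write `I(p) = ∑_{i < N} H(p_i) - (H(p) - H(p_N))`. Each `H(p_i)` is at most `ln n_i`
(`entropy_le_log_card`), and a marginal never has more entropy than the joint distribution
(`entropy_marginal_le`), so `I(p) ≤ ∑_{i < N} ln n_i`. Equality in the total forces equality
in every one of these bounds, and `H(q) = ln n` holds only for the uniform distribution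
(`eq_uniform_of_entropy_eq`). The bound and its equality case both come from the identity
`n (ln n - H(q)) = ∑ φ(n q(a))`, where `φ(x) = x ln x + 1 - x` is nonnegative on `[0, ∞)` and
vanishes only at `x = 1`.
-/

open Finset

/-- A probability distribution on a finite set: nonnegative and summing to 1. -/
def IsProbDist {α : Type*} [Fintype α] (p : α → ℝ) : Prop :=
  (∀ a, 0 ≤ p a) ∧ ∑ a, p a = 1

/-- Shannon entropy (with `0 * log 0 = 0`, automatic since `Real.log 0 = 0`). -/
noncomputable def entropy {α : Type*} [Fintype α] (p : α → ℝ) : ℝ :=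
  - ∑ a, p a * Real.log (p a)

/-- The `i`-th marginal of a distribution on a finite product. -/
noncomputable def marginal {m : ℕ} {Ω : Fin m → Type*} [∀ i, Fintype (Ω i)]
    [∀ i, DecidableEq (Ω i)] (p : (∀ i, Ω i) → ℝ) (i : Fin m) : Ω i → ℝ :=
  fun x => ∑ ω : ∀ j, Ω j, if ω i = x then p ω else 0

/-- Multi-information `I(p) = ∑ H(p_i) − H(p)`. -/
noncomputable def multiInfo {m : ℕ} {Ω : Fin m → Type*} [∀ i, Fintype (Ω i)]
    [∀ i, DecidableEq (Ω i)] (p : (∀ i, Ω i) → ℝ) : ℝ :=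
  (∑ i, entropy (marginal p i)) - entropy p

/-- `n (ln n - H(q))`, which is `n` times the Kullback-Leibler divergence of `q` from the uniform
distribution, as a sum of the terms `klFun (n q(a))`. -/
lemma sum_klFun_eq {α : Type*} [Fintype α] {q : α → ℝ} (hq : IsProbDist q)
    (hn : 0 < Fintype.card α) :
    ∑ a, InformationTheory.klFun (Fintype.card α * q a)
      = Fintype.card α * (Real.log (Fintype.card α) - entropy q) := by
  have hn' : (Fintype.card α : ℝ) ≠ 0 := by positivity
  have h : ∀ a, InformationTheory.klFun (Fintype.card α * q a)
      = Fintype.card α * Real.log (Fintype.card α) * q a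
        + Fintype.card α * (q a * Real.log (q a)) + 1 - Fintype.card α * q a := by
    intro a
    unfold InformationTheory.klFun
    by_cases h0 : q a = 0
    · simp [h0]
    · rw [Real.log_mul hn' h0]
      ring
  simp only [h, sum_sub_distrib, sum_add_distrib, ← mul_sum, hq.2, entropy, sum_const, card_univ,
    nsmul_eq_mul]
  ring

lemma entropy_le_log_card {α : Type*} [Fintype α] {q : α → ℝ} (hq : IsProbDist q)
    (hn : 0 < Fintype.card α) : entropy q ≤ Real.log (Fintype.card α) := by
  have h := sum_klFun_eq hq hn
  have h0 : 0 ≤ ∑ a, InformationTheory.klFun (Fintype.card α * q a) :=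
    sum_nonneg fun a _ => InformationTheory.klFun_nonneg (mul_nonneg (Nat.cast_nonneg _) (hq.1 a))
  rw [h] at h0
  have hn' : (0 : ℝ) < Fintype.card α := by exact_mod_cast hn
  linarith [nonneg_of_mul_nonneg_right h0 hn']

lemma eq_uniform_of_entropy_eq {α : Type*} [Fintype α] {q : α → ℝ} (hq : IsProbDist q)
    (hn : 0 < Fintype.card α) (h : entropy q = Real.log (Fintype.card α)) (a : α) :
    q a = 1 / (Fintype.card α : ℝ) := by
  have hs := sum_klFun_eq hq hn
  have hpos : ∀ b, 0 ≤ Fintype.card α * q b := fun b => mul_nonneg (Nat.cast_nonneg _) (hq.1 b)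
  rw [h, sub_self, mul_zero,
    sum_eq_zero_iff_of_nonneg fun b _ => InformationTheory.klFun_nonneg (hpos b)] at hs
  have ha := (InformationTheory.klFun_eq_zero_iff (hpos a)).1 (hs a (mem_univ a))
  have hn' : (Fintype.card α : ℝ) ≠ 0 := by positivity
  field_simp
  linarith

/-- Integrating a function of one coordinate against the marginal or against `p` is the same. -/
lemma sum_marginal_mul {m : ℕ} {Ω : Fin m → Type*} [∀ i, Fintype (Ω i)]
    [∀ i, DecidableEq (Ω i)] (p : (∀ i, Ω i) → ℝ) (i : Fin m) (f : Ω i → ℝ) :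
    ∑ x, marginal p i x * f x = ∑ ω, p ω * f (ω i) := by
  simp only [marginal, sum_mul]
  rw [sum_comm]
  refine sum_congr rfl fun ω _ => ?_
  simp

lemma IsProbDist.marginal {m : ℕ} {Ω : Fin m → Type*} [∀ i, Fintype (Ω i)]
    [∀ i, DecidableEq (Ω i)] {p : (∀ i, Ω i) → ℝ} (hp : IsProbDist p) (i : Fin m) :
    IsProbDist (marginal p i) := by
  refine ⟨fun x => sum_nonneg fun ω _ => ?_, ?_⟩
  · split_ifs
    exacts [hp.1 ω, le_rfl]
  · simpa [hp.2] using sum_marginal_mul p i fun _ => 1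

/-- Since `p ω ≤ p_i (ω i)` pointwise, `-ln p_i (ω i) ≤ -ln p ω` wherever `p ω > 0`; averaging
over `p` gives `H(p_i) ≤ H(p)`. -/
lemma entropy_marginal_le {m : ℕ} {Ω : Fin m → Type*} [∀ i, Fintype (Ω i)]
    [∀ i, DecidableEq (Ω i)] {p : (∀ i, Ω i) → ℝ} (hp : IsProbDist p) (i : Fin m) :
    entropy (marginal p i) ≤ entropy p := by
  unfold entropy
  rw [sum_marginal_mul p i fun x => Real.log (marginal p i x)]
  refine neg_le_neg (sum_le_sum fun ω _ => ?_)
  rcases (hp.1 ω).eq_or_lt with h0 | h0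
  · simp [← h0]
  · refine mul_le_mul_of_nonneg_left (Real.log_le_log h0 ?_) h0.le
    have := single_le_sum (f := fun ω' : ∀ j, Ω j => if ω' i = ω i then p ω' else 0)
      (fun ω' _ => by
        split_ifs
        exacts [hp.1 ω', le_rfl]) (mem_univ ω)
    simpa [marginal] using this

/-- If `p` on `Ω₁ × ⋯ × Ω_N` (with `N+1` units indexed by `Fin (N+1)`) satisfies
`I(p) = ∑_{i=1}^{N−1} ln n_i`, then `H(p_i) = ln n_i` for `i = 1,…,N−1` (equivalently
the marginal `p_i` is uniform on `Ω_i`), and moreover `H(p) = H(p_N)`. -/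
theorem stmt19 {N : ℕ} (hN : 1 ≤ N) (Ω : Fin (N + 1) → Type*) [∀ i, Fintype (Ω i)]
    [∀ i, DecidableEq (Ω i)]
    (hcard : ∀ i, 2 ≤ Fintype.card (Ω i))
    (hmono : ∀ i j : Fin (N + 1), i ≤ j → Fintype.card (Ω i) ≤ Fintype.card (Ω j))
    (p : (∀ i, Ω i) → ℝ) (hp : IsProbDist p)
    (hmax : multiInfo p = ∑ i : Fin N, Real.log (Fintype.card (Ω i.castSucc))) :
    (∀ i : Fin N,
      entropy (marginal p i.castSucc) = Real.log (Fintype.card (Ω i.castSucc)) ∧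
      ∀ x : Ω i.castSucc,
        marginal p i.castSucc x = 1 / (Fintype.card (Ω i.castSucc) : ℝ)) ∧
    entropy p = entropy (marginal p (Fin.last N)) := by
  have hpos : ∀ i, 0 < Fintype.card (Ω i) := fun i => two_pos.trans_le (hcard i)
  have hle : ∀ i : Fin N, entropy (marginal p i.castSucc)
      ≤ Real.log (Fintype.card (Ω i.castSucc)) :=
    fun i => entropy_le_log_card (hp.marginal _) (hpos _)
  have hlast := entropy_marginal_le hp (Fin.last N)
  have hsum := sum_le_sum fun i (_ : i ∈ (univ : Finset (Fin N))) => hle i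
  rw [multiInfo, Fin.sum_univ_castSucc] at hmax
  have heq : ∀ i : Fin N, entropy (marginal p i.castSucc)
      = Real.log (Fintype.card (Ω i.castSucc)) := fun i =>
    (sum_eq_sum_iff_of_le fun i _ => hle i).1 (by linarith) i (mem_univ i)
  exact ⟨fun i => ⟨heq i, eq_uniform_of_entropy_eq (hp.marginal _) (hpos _) (heq i)⟩,
    by linarith⟩
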